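/- For every m ≥ 0 and the binary word w = (01)^m (the m-fold repetition of 01), there exists r ≥ 0 such that occ(w, (01)^r) = maxocc(w); that is, some most frequent subword of (01)^m has the form (01)^r. -/

import Mathlib

open List Real

/-- `occ w u` is the number of occurrences of `u` as a subword (subsequence) of `w`,
i.e. the multiplicity of `u` among the `2^|w|` sublists of `w`. -/
def occ {α : Type*} [DecidableEq α] (w u : List α) : ℕ := w.sublists.count u

/-- `maxocc w` is the maximal number of occurrences of any subword of `w`. -/
noncomputable def maxocc {α : Type*} [DecidableEq α] (w : List α) : ℕ :=
  sSup {n : ℕ | ∃ u : List α, occ w u = n}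

/-- `rep v m` is the concatenation of `m` copies of the word `v`. -/
def rep {α : Type*} (v : List α) (m : ℕ) : List α := (List.replicate m v).flatten

/-!
Let `a ≠ b`. An occurrence of a word `u` over `{a, b}` in `(ab)^m` assigns to each letter of `u` a
block `ab`. These block indices increase weakly, and strictly except between the two letters of a
factor `ab` of `u`. If `u` has `d` such factors, shifting the indices makes them strictly
increasing in a range of size `m + d`, so `u` occurs exactly `C(m + d, |u|)` times; recursively,
deleting the first block of `(ab)^(m+1)` corresponds to Pascal's rule. The factors `ab` do not
overlap, hence `2d ≤ |u|`. If `|u| = 2r`, the count is at most `C(m + r, 2r)`, which is the count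
for `(ab)^r`; if `|u| = 2r + 1`, it is at most `C(m + r, 2r + 1) ≤ C(m + r + 1, 2r + 2)`, which is
the count for `(ab)^(r+1)`.
-/

section Occ

variable {α : Type*} [DecidableEq α]

lemma occ_eq_count_sublists' (w u : List α) : occ w u = w.sublists'.count u :=
  (List.sublists_perm_sublists' w).count_eq u

lemma occ_cons_cons_self (a : α) (w u : List α) :
    occ (a :: w) (a :: u) = occ w (a :: u) + occ w u := by
  simp only [occ_eq_count_sublists', List.sublists'_cons, List.count_append,
    List.count_map_of_injective _ _ List.cons_injective]

lemma occ_cons_of_head?_ne {a : α} {u : List α} (h : u.head? ≠ some a) (w : List α) :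
    occ (a :: w) u = occ w u := by
  have not_mem : u ∉ w.sublists'.map (a :: ·) := by
    intro hu
    obtain ⟨v, -, rfl⟩ := List.mem_map.mp hu
    exact h rfl
  rw [occ_eq_count_sublists', List.sublists'_cons, List.count_append,
    List.count_eq_zero_of_not_mem not_mem, add_zero, occ_eq_count_sublists']

lemma occ_nil_right (w : List α) : occ w [] = 1 := by
  induction w with
  | nil => rfl
  | cons a w ih => rwa [occ_cons_of_head?_ne (by simp)]

lemma occ_pos_iff_sublist {w u : List α} : 0 < occ w u ↔ u <+ w := by
  rw [occ, List.count_pos_iff, List.mem_sublists]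

lemma occ_nil_cons (a : α) (u : List α) : occ [] (a :: u) = 0 :=
  Nat.eq_zero_of_not_pos fun h ↦ by simpa using occ_pos_iff_sublist.mp h

lemma bddAbove_occ (w : List α) : BddAbove {n : ℕ | ∃ u : List α, occ w u = n} := by
  refine ⟨w.sublists.length, ?_⟩
  rintro _ ⟨u, rfl⟩
  exact List.count_le_length

lemma occ_le_maxocc (w u : List α) : occ w u ≤ maxocc w :=
  le_csSup (bddAbove_occ w) ⟨u, rfl⟩

lemma exists_occ_eq_maxocc (w : List α) : ∃ u : List α, occ w u = maxocc w :=
  Nat.sSup_mem (s := {n | ∃ u : List α, occ w u = n}) ⟨_, [], rfl⟩ (bddAbove_occ w)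

end Occ

section Rep

variable {α : Type*}

lemma rep_zero (v : List α) : rep v 0 = [] := rfl

lemma rep_pair_succ (a b : α) (m : ℕ) : rep [a, b] (m + 1) = a :: b :: rep [a, b] m := by
  simp only [rep, List.replicate_succ, List.flatten_cons, List.cons_append, List.nil_append]

lemma length_rep (v : List α) (m : ℕ) : (rep v m).length = m * v.length := by
  simp only [rep, List.length_flatten, List.map_replicate, List.sum_replicate, smul_eq_mul]

lemma mem_of_mem_rep {v : List α} {m : ℕ} {c : α} (h : c ∈ rep v m) : c ∈ v := by
  obtain ⟨l, hl, hc⟩ := List.mem_flatten.mp h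
  exact List.eq_of_mem_replicate hl ▸ hc

end Rep

section FactorCount

variable {α : Type*} [DecidableEq α] {a b : α}

/-- The number of occurrences of `ab` in `u` as a factor, i.e. at two consecutive positions; the
pairs of consecutive letters of `u` are listed by `u.zip u.tail`. -/
def factorCount (a b : α) (u : List α) : ℕ := (u.zip u.tail).count (a, b)

lemma factorCount_cons_of_not {c : α} {u : List α} (h : ¬(c = a ∧ u.head? = some b)) :
    factorCount a b (c :: u) = factorCount a b u := by
  cases u with
  | nil => rfl
  | cons d u =>
    have ne : (c, d) ≠ (a, b) := by simpa using h
    simp only [factorCount, List.tail_cons, List.zip_cons_cons, List.count_cons_of_ne ne]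

lemma factorCount_cons_cons_self (hab : a ≠ b) (u : List α) :
    factorCount a b (a :: b :: u) = factorCount a b u + 1 := by
  rw [← factorCount_cons_of_not (c := b) (u := u) fun h ↦ hab h.1.symm]
  simp only [factorCount, List.tail_cons, List.zip_cons_cons, List.count_cons_self]

lemma factorCount_rep (hab : a ≠ b) (r : ℕ) : factorCount a b (rep [a, b] r) = r := by
  induction r with
  | zero => rfl
  | succ r ih => rw [rep_pair_succ, factorCount_cons_cons_self hab, ih]

lemma two_mul_factorCount_le_length (hab : a ≠ b) :
    ∀ u : List α, 2 * factorCount a b u ≤ u.length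
  | [] => le_rfl
  | c :: u => by
    by_cases h : c = a ∧ u.head? = some b
    · obtain ⟨hc, hu⟩ := h
      obtain ⟨v, rfl⟩ := List.head?_eq_some_iff.mp hu
      have ih := two_mul_factorCount_le_length hab v
      rw [hc, factorCount_cons_cons_self hab, List.length_cons, List.length_cons]
      lia
    · have ih := two_mul_factorCount_le_length hab u
      rw [factorCount_cons_of_not h, List.length_cons]
      lia

end FactorCount

section AlternatingWord

variable {α : Type*} [DecidableEq α] {a b : α}

lemma occ_rep_pair_succ_cons_cons (hab : a ≠ b) (m : ℕ) (u : List α) :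
    occ (rep [a, b] (m + 1)) (a :: b :: u) =
      occ (rep [a, b] m) (a :: b :: u) +
        (occ (rep [a, b] m) (b :: u) + occ (rep [a, b] m) u) := by
  rw [rep_pair_succ, occ_cons_cons_self, occ_cons_of_head?_ne (by simpa using hab),
    occ_cons_cons_self]

lemma occ_rep_pair_succ_cons_of_not (hab : a ≠ b) (m : ℕ) {c : α} {u : List α}
    (hc : c = a ∨ c = b) (h : ¬(c = a ∧ u.head? = some b)) :
    occ (rep [a, b] (m + 1)) (c :: u) =
      occ (rep [a, b] m) (c :: u) + occ (rep [a, b] m) u := by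
  rw [rep_pair_succ]
  rcases hc with rfl | rfl
  · have hu : u.head? ≠ some b := fun hu ↦ h ⟨rfl, hu⟩
    rw [occ_cons_cons_self, occ_cons_of_head?_ne (by simpa using hab), occ_cons_of_head?_ne hu]
  · rw [occ_cons_of_head?_ne (by simpa using hab.symm), occ_cons_cons_self]

theorem occ_rep_pair (hab : a ≠ b) (m : ℕ) {u : List α} (hu : ∀ c ∈ u, c = a ∨ c = b) :
    occ (rep [a, b] m) u = (m + factorCount a b u).choose u.length := by
  induction m generalizing u with
  | zero =>
    cases u with
    | nil => rfl
    | cons c u =>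
      have short := two_mul_factorCount_le_length hab (c :: u)
      rw [rep_zero, occ_nil_cons, Nat.choose_eq_zero_of_lt]
      rw [List.length_cons] at short ⊢
      lia
  | succ m ih =>
    cases u with
    | nil => rw [occ_nil_right, List.length_nil, Nat.choose_zero_right]
    | cons c u =>
      obtain ⟨hc, hu'⟩ := List.forall_mem_cons.mp hu
      by_cases h : c = a ∧ u.head? = some b
      · obtain ⟨rfl, hb⟩ := h
        obtain ⟨v, rfl⟩ := List.head?_eq_some_iff.mp hb
        have hv := (List.forall_mem_cons.mp hu').2
        rw [occ_rep_pair_succ_cons_cons hab, ih hu, ih hu', ih hv,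
          factorCount_cons_cons_self hab, factorCount_cons_of_not fun h ↦ hab h.1.symm]
        simp only [List.length_cons]
        rw [add_right_comm m 1, ← add_assoc m, Nat.choose_succ_succ' (m + _ + 1),
          Nat.choose_succ_succ' (m + _) v.length]
        ring
      · rw [occ_rep_pair_succ_cons_of_not hab m hc h, ih hu, ih hu', factorCount_cons_of_not h,
          List.length_cons, add_right_comm m 1, Nat.choose_succ_succ', add_comm]

theorem occ_rep_pair_rep_pair (hab : a ≠ b) (m r : ℕ) :
    occ (rep [a, b] m) (rep [a, b] r) = (m + r).choose (2 * r) := by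
  have letters : ∀ c ∈ rep [a, b] r, c = a ∨ c = b := fun c hc ↦ by
    simpa using mem_of_mem_rep hc
  rw [occ_rep_pair hab m letters, factorCount_rep hab, length_rep, mul_comm r,
    List.length_cons, List.length_singleton]

lemma exists_choose_le_choose_two_mul (m : ℕ) {d k : ℕ} (h : 2 * d ≤ k) :
    ∃ r : ℕ, (m + d).choose k ≤ (m + r).choose (2 * r) := by
  obtain ⟨r, rfl | rfl⟩ := Nat.even_or_odd' k
  · exact ⟨r, Nat.choose_le_choose _ (by lia)⟩
  · refine ⟨r + 1, ?_⟩
    calc (m + d).choose (2 * r + 1)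
      _ ≤ (m + r).choose (2 * r + 1) := Nat.choose_le_choose _ (by lia)
      _ ≤ (m + (r + 1)).choose (2 * (r + 1)) := Nat.choose_succ_succ' .. ▸ Nat.le_add_right _ _

theorem exists_occ_le_occ_rep_pair (hab : a ≠ b) (m : ℕ) (u : List α) :
    ∃ r : ℕ, occ (rep [a, b] m) u ≤ occ (rep [a, b] m) (rep [a, b] r) := by
  obtain h_zero | h_pos := (occ (rep [a, b] m) u).eq_zero_or_pos
  · exact ⟨0, h_zero.trans_le (Nat.zero_le _)⟩
  · have letters : ∀ c ∈ u, c = a ∨ c = b := fun c hc ↦ by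
      simpa using mem_of_mem_rep ((occ_pos_iff_sublist.mp h_pos).subset hc)
    simp only [occ_rep_pair hab m letters, occ_rep_pair_rep_pair hab]
    exact exists_choose_le_choose_two_mul m (two_mul_factorCount_le_length hab u)

theorem stmt_12_general (hab : a ≠ b) (m : ℕ) :
    ∃ r : ℕ, occ (rep [a, b] m) (rep [a, b] r) = maxocc (rep [a, b] m) := by
  obtain ⟨u, hu⟩ := exists_occ_eq_maxocc (rep [a, b] m)
  obtain ⟨r, hr⟩ := exists_occ_le_occ_rep_pair hab m u
  exact ⟨r, (occ_le_maxocc _ _).antisymm (hu ▸ hr)⟩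

end AlternatingWord

theorem stmt_12 (m : ℕ) :
    ∃ r : ℕ, occ (rep ([0, 1] : List (Fin 2)) m) (rep [0, 1] r) =
      maxocc (rep ([0, 1] : List (Fin 2)) m) :=
  stmt_12_general zero_ne_one m
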